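/- Validity of the global lower bound over a domain decomposition: let T, T̄_1, …, T̄_K : X →L[ℝ] X be continuous linear operators with β_k := inf_{w≠0} ‖T̄_k w‖/‖w‖ > 0 for each k, and let L_1, …, L_K ∈ ℝ satisfy L_k ≤ inf_{w≠0} ⟪T w, T̄_k w⟫/‖T̄_k w‖² for each k. Then max_{1 ≤ k ≤ K} β_k · L_k ≤ inf_{w≠0} ‖T w‖/‖w‖. -/

import Mathlib

/-!
By Cauchy-Schwarz, `⟪T w, T̄ w⟫ / ‖T̄ w‖² ≤ ‖T w‖ / ‖T̄ w‖`, so for every `w ≠ 0`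
`β_k * L_k ≤ (‖T̄_k w‖ / ‖w‖) * (‖T w‖ / ‖T̄_k w‖) = ‖T w‖ / ‖w‖`. Evaluating the infimum that
bounds `L_k` at `w` requires its quotient to be bounded below (an unbounded real infimum is `0`);
`-‖T‖ / β_k` is a lower bound, by Cauchy-Schwarz and `β_k * ‖w‖ ≤ ‖T̄_k w‖`. The hypothesis
`0 < β_k` also forces `X` to be nontrivial, as the infimum over the empty type is `0`.
-/

open scoped RealInnerProductSpace

/-- Validity of the global lower bound over a domain decomposition: if
`β_k = inf_{w≠0} ‖T̄_k w‖/‖w‖ > 0` and `L_k ≤ inf_{w≠0} ⟪T w, T̄_k w⟫/‖T̄_k w‖²` for each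
`k`, then `max_k β_k · L_k ≤ inf_{w≠0} ‖T w‖/‖w‖`. -/
theorem global_lowerBound_valid
    {X : Type*} [NormedAddCommGroup X] [InnerProductSpace ℝ X] [CompleteSpace X]
    {K : ℕ} (hK : 1 ≤ K) (T : X →L[ℝ] X) (Tbar : Fin K → X →L[ℝ] X)
    (hβ : ∀ k : Fin K, 0 < ⨅ w : {w : X // w ≠ 0}, ‖Tbar k w.1‖ / ‖w.1‖)
    (L : Fin K → ℝ)
    (hL : ∀ k : Fin K,
      L k ≤ ⨅ w : {w : X // w ≠ 0}, ⟪T w.1, Tbar k w.1⟫ / ‖Tbar k w.1‖ ^ 2) :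
    (Finset.univ.sup' ⟨⟨0, hK⟩, Finset.mem_univ _⟩
        fun k => (⨅ w : {w : X // w ≠ 0}, ‖Tbar k w.1‖ / ‖w.1‖) * L k) ≤
      ⨅ w : {w : X // w ≠ 0}, ‖T w.1‖ / ‖w.1‖ := by
  refine Finset.sup'_le _ _ fun k _ => ?_
  have hβk := hβ k
  have hLk := hL k
  have : Nonempty {w : X // w ≠ 0} := by
    by_contra h
    rw [not_nonempty_iff] at h
    simp [Real.iInf_of_isEmpty] at hβk
  set β := ⨅ w : {w : X // w ≠ 0}, ‖Tbar k w.1‖ / ‖w.1‖ with hβdef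
  have hβle (w : {w : X // w ≠ 0}) : β ≤ ‖Tbar k w.1‖ / ‖w.1‖ :=
    ciInf_le ⟨0, by rintro _ ⟨v, rfl⟩; positivity⟩ w
  have hw (w : {w : X // w ≠ 0}) : 0 < ‖w.1‖ := norm_pos_iff.2 w.2
  have hβmul (w : {w : X // w ≠ 0}) : β * ‖w.1‖ ≤ ‖Tbar k w.1‖ :=
    (le_div_iff₀ (hw w)).1 (hβle w)
  have hb (w : {w : X // w ≠ 0}) : 0 < ‖Tbar k w.1‖ :=
    (mul_pos hβk (hw w)).trans_le (hβmul w)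
  have hcs (w : {w : X // w ≠ 0}) :
      |⟪T w.1, Tbar k w.1⟫ / ‖Tbar k w.1‖ ^ 2| ≤ ‖T w.1‖ / ‖Tbar k w.1‖ := by
    have h := hb w
    rw [abs_div, abs_of_pos (pow_pos h 2), div_le_div_iff₀ (pow_pos h 2) h]
    nlinarith [mul_le_mul_of_nonneg_right (abs_real_inner_le_norm (T w.1) (Tbar k w.1)) h.le]
  have hbdd : BddBelow (Set.range fun w : {w : X // w ≠ 0} =>
      ⟪T w.1, Tbar k w.1⟫ / ‖Tbar k w.1‖ ^ 2) := by
    refine ⟨-(‖T‖ / β), ?_⟩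
    rintro _ ⟨w, rfl⟩
    have h : ‖T w.1‖ / ‖Tbar k w.1‖ ≤ ‖T‖ / β := by
      rw [div_le_div_iff₀ (hb w) hβk]
      nlinarith [mul_le_mul_of_nonneg_right (T.le_opNorm w.1) hβk.le,
        mul_le_mul_of_nonneg_left (hβmul w) (norm_nonneg T)]
    exact (abs_le.1 ((hcs w).trans h)).1
  refine le_ciInf fun w => ?_
  have hLw : L k ≤ ‖T w.1‖ / ‖Tbar k w.1‖ :=
    (hLk.trans (ciInf_le hbdd w)).trans ((le_abs_self _).trans (hcs w))
  calc β * L k ≤ β * (‖T w.1‖ / ‖Tbar k w.1‖) := mul_le_mul_of_nonneg_left hLw hβk.le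
    _ ≤ (‖Tbar k w.1‖ / ‖w.1‖) * (‖T w.1‖ / ‖Tbar k w.1‖) :=
      mul_le_mul_of_nonneg_right (hβle w) (by positivity)
    _ = ‖T w.1‖ / ‖w.1‖ := by
      have := (hb w).ne'
      field_simp
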